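/- Let S = [[1,0],[0,0]] and T(d) = [[d, √(d(1−d))],[√(d(1−d)), 1−d]] for 0 ≤ d ≤ 1. Then ‖S − T((1+√d)/2)‖ = ‖T(d) − T((1+√d)/2)‖ = √(2 − 2√d)/2 ≤ 1/√2. -/

import Mathlib

/-- The operator norm (ℓ²→ℓ² norm) of a square matrix. -/
noncomputable def matOpNorm {n : Type*} [Fintype n] [DecidableEq n] {𝕜 : Type*} [RCLike 𝕜]
    (M : Matrix n n 𝕜) : ℝ :=
  ‖Matrix.toEuclideanCLM (𝕜 := 𝕜) M‖

/-- The rank-one projection matrix `S = [[1,0],[0,0]]`. -/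
noncomputable def Smat : Matrix (Fin 2) (Fin 2) ℝ := !![1, 0; 0, 0]

/-- The rank-one projection matrix `T(d) = [[d, √(d(1−d))],[√(d(1−d)), 1−d]]`. -/
noncomputable def Tmat (d : ℝ) : Matrix (Fin 2) (Fin 2) ℝ :=
  !![d, Real.sqrt (d * (1 - d)); Real.sqrt (d * (1 - d)), 1 - d]

/-!
Write `√d = cos φ` with `0 ≤ φ ≤ π / 2`. Then `S`, `T((1 + √d) / 2)` and `T(d)` are the orthogonal
projections onto the lines at angles `0`, `φ / 2` and `φ`. The difference of the projections onto
lines at angles `α` and `β` is `sin (α - β)` times an orthogonal matrix, so both norms equal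
`sin (φ / 2) = √((1 - cos φ) / 2)`.
-/

open Matrix Real

lemma matOpNorm_sq_of_conjTranspose_mul_self_eq_smul_one {n 𝕜 : Type*} [Fintype n]
    [DecidableEq n] [Nonempty n] [RCLike 𝕜] {M : Matrix n n 𝕜} {c : 𝕜} (hM : Mᴴ * M = c • 1) :
    matOpNorm M ^ 2 = ‖c‖ := by
  rw [matOpNorm, sq, ← CStarRing.norm_star_mul_self, ← map_star, ← map_mul, star_eq_conjTranspose,
    hM, map_smul, map_one, norm_smul, norm_one, mul_one]

/-- The orthogonal projection of the plane onto the line spanned by the unit vector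
`(cos θ, sin θ)`, as the outer product of that vector with itself. -/
noncomputable def lineProj (θ : ℝ) : Matrix (Fin 2) (Fin 2) ℝ :=
  vecMulVec ![cos θ, sin θ] ![cos θ, sin θ]

lemma lineProj_eq (θ : ℝ) :
    lineProj θ = !![cos θ ^ 2, cos θ * sin θ; cos θ * sin θ, sin θ ^ 2] := by
  ext i j
  fin_cases i <;> fin_cases j <;> simp [lineProj, vecMulVec_apply, sq, mul_comm]

lemma lineProj_sub_lineProj (α β : ℝ) :
    lineProj α - lineProj β =
      sin (α - β) • !![-sin (α + β), cos (α + β); cos (α + β), sin (α + β)] := by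
  have hα := sin_sq_add_cos_sq α
  have hβ := sin_sq_add_cos_sq β
  rw [lineProj_eq, lineProj_eq, sin_sub, sin_add, cos_add]
  ext i j
  fin_cases i <;> fin_cases j <;> simp <;> grind

lemma conjTranspose_mul_self_lineProj_sub (α β : ℝ) :
    (lineProj α - lineProj β)ᴴ * (lineProj α - lineProj β) = (sin (α - β) ^ 2) • 1 := by
  have h := sin_sq_add_cos_sq (α + β)
  rw [lineProj_sub_lineProj]
  ext i j
  fin_cases i <;> fin_cases j <;> simp [mul_apply, Fin.sum_univ_two] <;> grind

lemma matOpNorm_lineProj_sub (α β : ℝ) :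
    matOpNorm (lineProj α - lineProj β) = |sin (α - β)| := by
  have hsq := matOpNorm_sq_of_conjTranspose_mul_self_eq_smul_one
    (conjTranspose_mul_self_lineProj_sub α β)
  rw [norm_pow, norm_eq_abs] at hsq
  exact (sq_eq_sq₀ (norm_nonneg _) (abs_nonneg _)).mp hsq

lemma lineProj_zero : lineProj 0 = Smat := by
  simp [lineProj_eq, Smat]

lemma Tmat_cos_sq {θ : ℝ} (hθ : 0 ≤ cos θ * sin θ) : Tmat (cos θ ^ 2) = lineProj θ := by
  rw [Tmat, lineProj_eq, ← sin_sq, ← mul_pow, sqrt_sq hθ]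

lemma Tmat_half_one_add_cos {φ : ℝ} (hφ : 0 ≤ sin φ) :
    Tmat ((1 + cos φ) / 2) = lineProj (φ / 2) := by
  have hcos : (1 + cos φ) / 2 = cos (φ / 2) ^ 2 := by
    rw [cos_sq, mul_div_cancel₀ φ two_ne_zero]
    ring
  have hmul : cos (φ / 2) * sin (φ / 2) = sin φ / 2 := by
    have h := sin_two_mul (φ / 2)
    rw [mul_div_cancel₀ φ two_ne_zero] at h
    linarith
  rw [hcos, Tmat_cos_sq (hmul ▸ div_nonneg hφ zero_le_two)]

lemma abs_sin_half_eq_sqrt_div_two (φ : ℝ) : |sin (φ / 2)| = √(2 - 2 * cos φ) / 2 := by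
  have hquarter : (1 - cos φ) / 2 = (2 - 2 * cos φ) / 2 ^ 2 := by ring
  rw [abs_sin_half, hquarter, sqrt_div' _ (sq_nonneg 2), sqrt_sq zero_le_two]

theorem stmt9 (d : ℝ) (h₀ : 0 ≤ d) (h₁ : d ≤ 1) :
    matOpNorm (Smat - Tmat ((1 + Real.sqrt d) / 2)) = Real.sqrt (2 - 2 * Real.sqrt d) / 2 ∧
      matOpNorm (Tmat d - Tmat ((1 + Real.sqrt d) / 2)) = Real.sqrt (2 - 2 * Real.sqrt d) / 2 ∧
      Real.sqrt (2 - 2 * Real.sqrt d) / 2 ≤ (Real.sqrt 2)⁻¹ := by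
  obtain ⟨φ, hsin, hcos⟩ : ∃ φ, 0 ≤ sin φ ∧ cos φ = √d :=
    ⟨arccos √d, sin_nonneg_of_nonneg_of_le_pi (arccos_nonneg _) (arccos_le_pi _),
      cos_arccos (neg_one_lt_zero.le.trans (sqrt_nonneg d)) (sqrt_le_one.mpr h₁)⟩
  have hmul : 0 ≤ cos φ * sin φ := mul_nonneg (hcos ▸ sqrt_nonneg d) hsin
  have hTd : Tmat d = lineProj φ := by rw [← Tmat_cos_sq hmul, hcos, sq_sqrt h₀]
  have hbound : √(2 - 2 * √d) / 2 ≤ (√2)⁻¹ := by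
    rw [← sqrt_div_self]
    gcongr
    linarith [sqrt_nonneg d]
  refine ⟨?_, ?_, hbound⟩
  · rw [← hcos, Tmat_half_one_add_cos hsin, ← lineProj_zero, matOpNorm_lineProj_sub, zero_sub,
      sin_neg, abs_neg, abs_sin_half_eq_sqrt_div_two]
  · rw [hTd, ← hcos, Tmat_half_one_add_cos hsin, matOpNorm_lineProj_sub, sub_half,
      abs_sin_half_eq_sqrt_div_two]
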